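/- For every n ≥ 1, dim_ℂ Ĥ^n_f = dim_ℂ Ĥ^{n−1}_e + (r+s−2)(r+s−1)^{n−1}. -/

import Mathlib

open Finsupp Submodule LinearMap

set_option maxSynthPendingDepth 2

namespace NilpotentCohomology

/-- The big space of cochains of all degrees: formal ℂ-linear combinations of
basis symbols `φ^I_x` indexed by a multi-index `I : List (Fin m)` and an output
index `x : Fin m`. -/
abbrev Cochain (m : ℕ) : Type := (List (Fin m) × Fin m) →₀ ℂ

/-- Parity of an index: `0` if the index is among the first `r` (even) ones, `1` otherwise. -/
def par (r : ℕ) {m : ℕ} (i : Fin m) : ℕ := if (i : ℕ) < r then 0 else 1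

/-- Parity of a multi-index: the sum of the parities of its entries. -/
def lpar (r : ℕ) {m : ℕ} (I : List (Fin m)) : ℕ := (I.map (par r)).sum

/-- Parity of a basis cochain `φ^I_x`: `|I| + |x|`. -/
def ppar (r : ℕ) {m : ℕ} (p : List (Fin m) × Fin m) : ℕ := lpar r p.1 + par r p.2

/-- `(I, J, k)`: the multi-index `I` with its `k`-th entry (0-indexed) replaced by the string `J`. -/
def insertAt {m : ℕ} (I J : List (Fin m)) (k : ℕ) : List (Fin m) :=
  I.take k ++ J ++ I.drop (k + 1)

/-- The insertion product of two basis cochains `φ^I_x ∘ φ^J_y`. -/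
noncomputable def basisComp (r : ℕ) {m : ℕ} (p q : List (Fin m) × Fin m) : Cochain m :=
  ∑ k : Fin p.1.length,
    if p.1.get k = q.2 then
      ((-1 : ℂ) ^ (lpar r (p.1.take ((k : ℕ) + 1)) * ppar r q)) •
        Finsupp.single (insertAt p.1 q.1 (k : ℕ), p.2) (1 : ℂ)
    else 0

/-- The insertion product, extended bilinearly. -/
noncomputable def comp (r : ℕ) {m : ℕ} :
    Cochain m →ₗ[ℂ] Cochain m →ₗ[ℂ] Cochain m :=
  Finsupp.lsum ℂ fun p => LinearMap.toSpanSingleton ℂ _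
    (Finsupp.lsum ℂ fun q => LinearMap.toSpanSingleton ℂ (Cochain m) (basisComp r p q))

/-- The bracket `[φ, ψ] = φ∘ψ − (−1)^{|φ||ψ|} ψ∘φ` of two parity-homogeneous cochains
of parities `pf` and `pg`. -/
noncomputable def bracket (r : ℕ) {m : ℕ} (pf pg : ℕ) (f g : Cochain m) : Cochain m :=
  comp r f g - ((-1 : ℂ) ^ (pf * pg)) • comp r g f

/-- The quadratic cochain `φ^{(a,a)}_b`. -/
noncomputable def dd {m : ℕ} (a b : Fin m) : Cochain m :=
  Finsupp.single ([a, a], b) (1 : ℂ)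

/-- The linear map multiplying each basis cochain by `(−1)^{its parity}`. -/
noncomputable def twist (r : ℕ) {m : ℕ} : Cochain m →ₗ[ℂ] Cochain m :=
  Finsupp.lsum ℂ fun p => LinearMap.toSpanSingleton ℂ (Cochain m)
    (((-1 : ℂ) ^ (ppar r p)) • Finsupp.single p (1 : ℂ))

/-- The coboundary operator `D(φ) = [d, φ] = d∘φ − (−1)^{|d||φ|} φ∘d` for the odd
codifferential `d = φ^{(a,a)}_b`, extended linearly from parity-homogeneous `φ`. -/
noncomputable def Dop (r : ℕ) {m : ℕ} (a b : Fin m) : Cochain m →ₗ[ℂ] Cochain m :=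
  comp r (dd a b) - ((comp r).flip (dd a b)) ∘ₗ twist r

/-- `C^n`: the span of the basis cochains `φ^I_x` with `I` of length `n`. -/
noncomputable def Cn (m n : ℕ) : Submodule ℂ (Cochain m) :=
  Submodule.span ℂ
    {f | ∃ I : List (Fin m), I.length = n ∧ ∃ x : Fin m, f = Finsupp.single (I, x) 1}

/-- `C^n_x`: the span of the basis cochains `φ^I_x` with `I` of length `n` and output `x`. -/
noncomputable def Cnx (m : ℕ) (n : ℕ) (x : Fin m) : Submodule ℂ (Cochain m) :=
  Submodule.span ℂ
    {f | ∃ I : List (Fin m), I.length = n ∧ f = Finsupp.single (I, x) 1}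

/-- The projection onto the cochains with output index `x`. -/
noncomputable def projOut {m : ℕ} (x : Fin m) : Cochain m →ₗ[ℂ] Cochain m :=
  Finsupp.lsum ℂ fun p => LinearMap.toSpanSingleton ℂ (Cochain m)
    (if p.2 = x then Finsupp.single p (1 : ℂ) else 0)

/-- `λ^J (φ^I_x) = φ^{JI}_x`, extended linearly. -/
noncomputable def lam {m : ℕ} (J : List (Fin m)) : Cochain m →ₗ[ℂ] Cochain m :=
  Finsupp.lsum ℂ fun p => LinearMap.toSpanSingleton ℂ (Cochain m)
    (Finsupp.single (J ++ p.1, p.2) (1 : ℂ))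

/-- `ρ^J (φ^I_x) = (−1)^{|I||J|} φ^{IJ}_x`, extended linearly. -/
noncomputable def rho (r : ℕ) {m : ℕ} (J : List (Fin m)) : Cochain m →ₗ[ℂ] Cochain m :=
  Finsupp.lsum ℂ fun p => LinearMap.toSpanSingleton ℂ (Cochain m)
    (((-1 : ℂ) ^ (lpar r p.1 * lpar r J)) • Finsupp.single (p.1 ++ J, p.2) (1 : ℂ))

/-- `θ = λ^{(a,b)} − λ^{(b,a)}`. -/
noncomputable def theta {m : ℕ} (a b : Fin m) : Cochain m →ₗ[ℂ] Cochain m :=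
  lam [a, b] - lam [b, a]

/-- `τ`: swaps the outputs `a` and `b` of basis cochains (identity on other outputs). -/
noncomputable def tau {m : ℕ} (a b : Fin m) : Cochain m →ₗ[ℂ] Cochain m :=
  Finsupp.lsum ℂ fun p => LinearMap.toSpanSingleton ℂ (Cochain m)
    (Finsupp.single (p.1, if p.2 = a then b else if p.2 = b then a else p.2) (1 : ℂ))

/-! ### Full cohomology -/

/-- Cocycles of degree `n` of the full complex. -/
noncomputable def Zfull (r : ℕ) {m : ℕ} (a b : Fin m) (n : ℕ) : Submodule ℂ (Cochain m) :=
  Cn m n ⊓ LinearMap.ker (Dop r a b)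

/-- Coboundaries of degree `n` of the full complex (`C^{-1} = 0`). -/
noncomputable def Bfull (r : ℕ) {m : ℕ} (a b : Fin m) : ℕ → Submodule ℂ (Cochain m)
  | 0 => ⊥
  | n + 1 => Submodule.map (Dop r a b) (Cn m n)

/-- The full cohomology `H^n = Z^n / B^n`. -/
noncomputable abbrev Hfull (r : ℕ) {m : ℕ} (a b : Fin m) (n : ℕ) : Type :=
  Zfull r a b n ⧸ (Bfull r a b n).comap (Zfull r a b n).subtype

/-! ### The restricted complexes -/

/-- The restricted differential `D_x`: the `e₁`-output component of `D` when `x = a`,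
and `D` itself (which preserves output `x`) otherwise. -/
noncomputable def Dx (r : ℕ) {m : ℕ} (a b x : Fin m) : Cochain m →ₗ[ℂ] Cochain m :=
  if x = a then projOut a ∘ₗ Dop r a b else Dop r a b

/-- Cocycles of the restricted complex `(C^•_x, D_x)`. -/
noncomputable def Zx (r : ℕ) {m : ℕ} (a b x : Fin m) (n : ℕ) : Submodule ℂ (Cochain m) :=
  Cnx m n x ⊓ LinearMap.ker (Dx r a b x)

/-- Coboundaries of the restricted complex `(C^•_x, D_x)` (`C^{-1}_x = 0`). -/
noncomputable def Bx (r : ℕ) {m : ℕ} (a b x : Fin m) : ℕ → Submodule ℂ (Cochain m)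
  | 0 => ⊥
  | n + 1 => Submodule.map (Dx r a b x) (Cnx m n x)

/-- Cohomology `H^n_x` of the restricted complex `(C^•_x, D_x)`. -/
noncomputable abbrev Hx (r : ℕ) {m : ℕ} (a b x : Fin m) (n : ℕ) : Type :=
  Zx r a b x n ⧸ (Bx r a b x n).comap (Zx r a b x n).subtype

/-! ### The subcomplex `C^•_a ⊕ C^•_b` and the `b`-output complex -/

/-- `C^n_a ⊕ C^n_b` (internal direct sum). -/
noncomputable def Cpair (m : ℕ) (a b : Fin m) (n : ℕ) : Submodule ℂ (Cochain m) :=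
  Cnx m n a ⊔ Cnx m n b

noncomputable def Zpair (r : ℕ) {m : ℕ} (a b : Fin m) (n : ℕ) : Submodule ℂ (Cochain m) :=
  Cpair m a b n ⊓ LinearMap.ker (Dop r a b)

noncomputable def Bpair (r : ℕ) {m : ℕ} (a b : Fin m) : ℕ → Submodule ℂ (Cochain m)
  | 0 => ⊥
  | n + 1 => Submodule.map (Dop r a b) (Cpair m a b n)

/-- `H^n`: the cohomology of the subcomplex `(C^•_a ⊕ C^•_b, D)`. -/
noncomputable abbrev Hpair (r : ℕ) {m : ℕ} (a b : Fin m) (n : ℕ) : Type :=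
  Zpair r a b n ⧸ (Bpair r a b n).comap (Zpair r a b n).subtype

/-- Cocycles of `(C^•_b, D_b)`, where `D_b` is the restriction of `D`. -/
noncomputable def Zm (r : ℕ) {m : ℕ} (a b : Fin m) (n : ℕ) : Submodule ℂ (Cochain m) :=
  Cnx m n b ⊓ LinearMap.ker (Dop r a b)

noncomputable def Bm (r : ℕ) {m : ℕ} (a b : Fin m) : ℕ → Submodule ℂ (Cochain m)
  | 0 => ⊥
  | n + 1 => Submodule.map (Dop r a b) (Cnx m n b)

/-- `H^n_b`: the cohomology of `(C^•_b, D_b)`. -/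
noncomputable abbrev Hm (r : ℕ) {m : ℕ} (a b : Fin m) (n : ℕ) : Type :=
  Zm r a b n ⧸ (Bm r a b n).comap (Zm r a b n).subtype

lemma Zm_le_Zpair (r : ℕ) {m : ℕ} (a b : Fin m) (n : ℕ) :
    Zm r a b n ≤ Zpair r a b n :=
  inf_le_inf le_sup_right le_rfl

lemma Bm_le_Bpair (r : ℕ) {m : ℕ} (a b : Fin m) : ∀ n : ℕ, Bm r a b n ≤ Bpair r a b n
  | 0 => bot_le
  | _ + 1 => Submodule.map_mono le_sup_right

/-- The natural map `H^n_b → H^n` induced by the inclusion of cocycles. -/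
noncomputable def iotaHm (r : ℕ) {m : ℕ} (a b : Fin m) (n : ℕ) :
    Hm r a b n →ₗ[ℂ] Hpair r a b n :=
  Submodule.mapQ _ _ (Submodule.inclusion (Zm_le_Zpair r a b n))
    (fun z hz => Bm_le_Bpair r a b n hz)

/-- `Ĥ^n_f`: the image of `H^n_b` in `H^n`. -/
noncomputable def Hfhat (r : ℕ) {m : ℕ} (a b : Fin m) (n : ℕ) : Submodule ℂ (Hpair r a b n) :=
  LinearMap.range (iotaHm r a b n)

/-- `Ĥ^n_e = H^n / Ĥ^n_f`. -/
noncomputable abbrev Hehat (r : ℕ) {m : ℕ} (a b : Fin m) (n : ℕ) : Type :=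
  Hpair r a b n ⧸ Hfhat r a b n

/-! ### The spaces `Ĉ^n_x` of nontrivial cocycles -/

/-- The recursively defined subspaces `Ĉ^n_x` of nontrivial cocycles. -/
noncomputable def Chat (r : ℕ) {m : ℕ} (a b x : Fin m) : ℕ → Submodule ℂ (Cochain m)
  | 0 => Submodule.span ℂ {Finsupp.single (([] : List (Fin m)), x) 1}
  | 1 => Submodule.span ℂ
      ({Finsupp.single ([a], x) 1} ∪
        ⋃ c ∈ {c : Fin m | c ≠ a ∧ c ≠ b}, lam [c] '' (Chat r a b x 0 : Set (Cochain m)))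
  | n + 2 => Submodule.span ℂ
      ((⋃ c ∈ {c : Fin m | c ≠ a ∧ c ≠ b},
          lam [c] '' (Chat r a b x (n + 1) : Set (Cochain m))) ∪
        (theta a b '' (Chat r a b x n : Set (Cochain m))) ∪
        ⋃ c ∈ {c : Fin m | c ≠ a ∧ c ≠ b},
          (lam [a] + rho r [a]) '' (lam [c] '' (Chat r a b x n : Set (Cochain m))))


/-! ### Auxiliary operators -/

lemma lam_single {m : ℕ} (J I : List (Fin m)) (x : Fin m) (c : ℂ) :
    lam J (single (I, x) c) = single (J ++ I, x) c := by
  simp [lam]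

lemma single_cons {m : ℕ} (i : Fin m) (I : List (Fin m)) (x : Fin m) :
    (single (i :: I, x) 1 : Cochain m) = lam [i] (single (I, x) 1) := by
  simp [lam_single]

lemma twist_single (r : ℕ) {m : ℕ} (p : List (Fin m) × Fin m) :
    twist r (single p 1) = ((-1 : ℂ) ^ (ppar r p)) • single p (1 : ℂ) := by
  simp [twist]

/-- Induction principle for equality of linear maps. -/
lemma coch_ext {m : ℕ} {V : Type*} [AddCommGroup V] [Module ℂ V] (F G : Cochain m →ₗ[ℂ] V)
    (h0 : ∀ x, F (single ([], x) 1) = G (single ([], x) 1))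
    (h1 : ∀ (i : Fin m) (I : List (Fin m)) (x : Fin m),
      F (single (I, x) 1) = G (single (I, x) 1) →
      F (lam [i] (single (I, x) 1)) = G (lam [i] (single (I, x) 1))) : F = G := by
  apply Finsupp.lhom_ext
  rintro ⟨I, x⟩ c
  have : F (single (I, x) 1) = G (single (I, x) 1) := by
    induction I with
    | nil => exact h0 x
    | cons i I ih => rw [single_cons]; exact h1 i I x ih
  rw [show (single (I, x) c : Cochain m) = c • single (I, x) 1 by simp, map_smul, map_smul, this]

/-- Basis version. -/
lemma coch_ext' {m : ℕ} {V : Type*} [AddCommGroup V] [Module ℂ V] (F G : Cochain m →ₗ[ℂ] V)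
    (h1 : ∀ (I : List (Fin m)) (x : Fin m),
      F (single (I, x) 1) = G (single (I, x) 1)) : F = G :=
  coch_ext F G (fun x => h1 [] x) (fun i I x _ => by rw [← single_cons]; exact h1 _ _)

/-- The internal part of the differential. -/
noncomputable def Qop (r : ℕ) {m : ℕ} (a b : Fin m) : Cochain m →ₗ[ℂ] Cochain m :=
  ((comp r).flip (dd a b)) ∘ₗ twist r

/-- The external part of the differential. -/
noncomputable def Aop (r : ℕ) {m : ℕ} (a b : Fin m) : Cochain m →ₗ[ℂ] Cochain m :=
  comp r (dd a b)

lemma Dop_eq (r : ℕ) {m : ℕ} (a b : Fin m) : Dop r a b = Aop r a b - Qop r a b := rfl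

lemma comp_single (r : ℕ) {m : ℕ} (p q : List (Fin m) × Fin m) :
    comp r (single p 1) (single q 1) = basisComp r p q := by
  simp [comp]

lemma Qop_single (r : ℕ) {m : ℕ} (a b : Fin m) (p : List (Fin m) × Fin m) :
    Qop r a b (single p 1) = ((-1 : ℂ) ^ (ppar r p)) • basisComp r p ([a, a], b) := by
  simp only [Qop, LinearMap.comp_apply, twist_single, map_smul, LinearMap.flip_apply, dd,
    comp_single]

lemma Qop_nil (r : ℕ) {m : ℕ} (a b x : Fin m) : Qop r a b (single ([], x) 1) = 0 := by
  rw [Qop_single]; simp [basisComp]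

lemma twist_lam (r : ℕ) {m : ℕ} (i : Fin m) (f : Cochain m) :
    twist r (lam [i] f) = ((-1 : ℂ) ^ par r i) • lam [i] (twist r f) := by
  have : twist r ∘ₗ lam [i] = ((-1 : ℂ) ^ par r i) • (lam [i] ∘ₗ twist r) := by
    apply coch_ext'
    intro I x
    simp only [LinearMap.comp_apply, lam_single, twist_single, LinearMap.smul_apply, map_smul,
      smul_smul]
    congr 1
    simp [ppar, lpar, pow_add, mul_assoc]
  exact LinearMap.congr_fun this f

lemma twist_twist (r : ℕ) {m : ℕ} (f : Cochain m) : twist r (twist r f) = f := by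
  have : twist r ∘ₗ twist r = (LinearMap.id : Cochain m →ₗ[ℂ] Cochain m) := by
    apply coch_ext'
    intro I x
    simp only [LinearMap.comp_apply, twist_single, map_smul, smul_smul, LinearMap.id_apply,
      ← mul_pow]
    simp
  exact LinearMap.congr_fun this f

lemma basisComp_cons (r : ℕ) {m : ℕ} (a b : Fin m) (ha : par r a = 0) (hb : par r b = 1)
    (i : Fin m) (I : List (Fin m)) (x : Fin m) :
    basisComp r (i :: I, x) ([a, a], b) =
      (-1 : ℂ) ^ par r i • lam [i] (basisComp r (I, x) ([a, a], b)) +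
      if i = b then - single (a :: a :: I, x) 1 else 0 := by
  have hp : ppar r ([a, a], b) = 1 := by simp [ppar, lpar, ha, hb]
  simp only [basisComp, hp, mul_one]
  simp only [List.length_cons]
  rw [Fin.sum_univ_succ, add_comm]
  congr 1
  · rw [map_sum, Finset.smul_sum]
    refine Finset.sum_congr rfl fun k _ => ?_
    simp only [List.get_eq_getElem, Fin.val_succ, List.getElem_cons_succ]
    split_ifs
    · simp only [map_smul, lam_single, smul_smul]
      congr 1
      simp [lpar, pow_add]
    · simp
  · simp only [List.get_eq_getElem, Fin.val_zero, List.getElem_cons_zero]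
    split_ifs with h
    · subst h
      simp [lpar, hb, insertAt]
    · simp [h]

lemma Qop_lam (r : ℕ) {m : ℕ} (a b : Fin m) (ha : par r a = 0) (hb : par r b = 1)
    (i : Fin m) (f : Cochain m) :
    Qop r a b (lam [i] f) = lam [i] (Qop r a b f) +
      if i = b then lam [a] (lam [a] (twist r f)) else 0 := by
  have : Qop r a b ∘ₗ lam [i] = lam [i] ∘ₗ Qop r a b +
      if i = b then lam [a] ∘ₗ lam [a] ∘ₗ twist r else 0 := by
    apply coch_ext'
    intro I x
    have h2 : ∀ k : ℕ, ((-1 : ℂ) ^ k) * (-1 : ℂ) ^ k = 1 := fun k => by rw [← mul_pow]; simp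
    have h1 : ppar r (i :: I, x) = par r i + ppar r (I, x) := by
      simp [ppar, lpar, add_assoc]
    simp only [LinearMap.comp_apply, LinearMap.add_apply, ← single_cons]
    rw [Qop_single, Qop_single, basisComp_cons r a b ha hb, h1, smul_add, smul_smul, map_smul]
    congr 1
    · congr 1
      rw [pow_add]
      linear_combination (-1 : ℂ) ^ (ppar r (I, x)) * h2 (par r i)
    · split_ifs with h
      · subst h
        simp only [LinearMap.comp_apply, twist_single, map_smul, lam_single, hb]
        simp [pow_add]
      · simp
  have := LinearMap.congr_fun this f
  split_ifs at this ⊢ <;> simpa using this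

lemma twist_Qop (r : ℕ) {m : ℕ} (a b : Fin m) (ha : par r a = 0) (hb : par r b = 1)
    (f : Cochain m) : twist r (Qop r a b f) = - Qop r a b (twist r f) := by
  have : twist r ∘ₗ Qop r a b = - (Qop r a b ∘ₗ twist r) := by
    apply coch_ext
    · intro x
      simp only [LinearMap.comp_apply, LinearMap.neg_apply, twist_single, map_smul, Qop_nil]
      simp
    · intro i I x h
      simp only [LinearMap.comp_apply, LinearMap.neg_apply] at h ⊢
      rw [twist_lam, Qop_lam r a b ha hb, map_smul, Qop_lam r a b ha hb, map_add, twist_lam, h]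
      split_ifs with hi
      · subst hi
        simp [twist_lam, ha, hb, add_comm]
      · simp
  exact LinearMap.congr_fun this f

lemma Qop_Qop (r : ℕ) {m : ℕ} (a b : Fin m) (hab : a ≠ b) (ha : par r a = 0) (hb : par r b = 1)
    (f : Cochain m) : Qop r a b (Qop r a b f) = 0 := by
  have : Qop r a b ∘ₗ Qop r a b = 0 := by
    apply coch_ext
    · intro x
      simp [Qop_nil]
    · intro i I x h
      simp only [LinearMap.comp_apply, LinearMap.zero_apply] at h ⊢
      rw [Qop_lam r a b ha hb, map_add, Qop_lam r a b ha hb, h]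
      split_ifs with hi
      · rw [Qop_lam r a b ha hb, Qop_lam r a b ha hb, twist_Qop r a b ha hb]
        simp [hab]
      · simp
  exact LinearMap.congr_fun this f

/-- Change output `a` to `b`, kill other outputs. -/
noncomputable def Sop {m : ℕ} (a b : Fin m) : Cochain m →ₗ[ℂ] Cochain m :=
  Finsupp.lsum ℂ fun p => LinearMap.toSpanSingleton ℂ (Cochain m)
    (if p.2 = a then single (p.1, b) 1 else 0)

/-- Append a letter on the right. -/
noncomputable def Rop {m : ℕ} (a : Fin m) : Cochain m →ₗ[ℂ] Cochain m :=
  Finsupp.lsum ℂ fun p => LinearMap.toSpanSingleton ℂ (Cochain m)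
    (single (p.1 ++ [a], p.2) 1)

lemma Sop_single {m : ℕ} (a b : Fin m) (I : List (Fin m)) (x : Fin m) :
    Sop a b (single (I, x) 1) = if x = a then single (I, b) 1 else 0 := by
  simp [Sop]

lemma Rop_single {m : ℕ} (a : Fin m) (I : List (Fin m)) (x : Fin m) :
    Rop a (single (I, x) 1) = single (I ++ [a], x) 1 := by
  simp [Rop]

lemma Sop_lam {m : ℕ} (a b i : Fin m) (f : Cochain m) :
    Sop a b (lam [i] f) = lam [i] (Sop a b f) := by
  have : Sop a b ∘ₗ lam [i] = lam [i] ∘ₗ Sop a b := by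
    apply coch_ext'
    intro I x
    simp only [LinearMap.comp_apply, lam_single, Sop_single]
    split_ifs <;> simp [lam_single]
  exact LinearMap.congr_fun this f

lemma Sop_Rop {m : ℕ} (a b i : Fin m) (f : Cochain m) :
    Sop a b (Rop i f) = Rop i (Sop a b f) := by
  have : Sop a b ∘ₗ Rop i = Rop i ∘ₗ Sop a b := by
    apply coch_ext'
    intro I x
    simp only [LinearMap.comp_apply, Rop_single, Sop_single]
    split_ifs <;> simp [Rop_single]
  exact LinearMap.congr_fun this f

lemma Sop_Sop {m : ℕ} (a b : Fin m) (hab : a ≠ b) (f : Cochain m) :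
    Sop a b (Sop a b f) = 0 := by
  have : Sop a b ∘ₗ Sop a b = 0 := by
    apply coch_ext'
    intro I x
    simp only [LinearMap.comp_apply, Sop_single]
    split_ifs <;> simp [Sop_single, hab.symm]
  exact LinearMap.congr_fun this f

lemma Rop_lam {m : ℕ} (a i : Fin m) (f : Cochain m) :
    Rop a (lam [i] f) = lam [i] (Rop a f) := by
  have : Rop a ∘ₗ lam [i] = lam [i] ∘ₗ Rop a := by
    apply coch_ext'
    intro I x
    simp [Rop_single, lam_single]
  exact LinearMap.congr_fun this f

lemma twist_Sop (r : ℕ) {m : ℕ} (a b : Fin m) (ha : par r a = 0) (hb : par r b = 1)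
    (f : Cochain m) : twist r (Sop a b f) = - Sop a b (twist r f) := by
  have : twist r ∘ₗ Sop a b = - (Sop a b ∘ₗ twist r) := by
    apply coch_ext'
    intro I x
    simp only [LinearMap.comp_apply, LinearMap.neg_apply, Sop_single, twist_single, map_smul]
    split_ifs with h
    · subst h
      rw [twist_single]
      simp [ppar, ha, hb, pow_succ]
    · simp
  exact LinearMap.congr_fun this f

lemma twist_Rop (r : ℕ) {m : ℕ} (a : Fin m) (ha : par r a = 0)
    (f : Cochain m) : twist r (Rop a f) = Rop a (twist r f) := by
  have : twist r ∘ₗ Rop a = Rop a ∘ₗ twist r := by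
    apply coch_ext'
    intro I x
    simp only [LinearMap.comp_apply, Rop_single, twist_single, map_smul]
    simp [ppar, lpar, ha]
  exact LinearMap.congr_fun this f

lemma Qop_Sop (r : ℕ) {m : ℕ} (a b : Fin m) (ha : par r a = 0) (hb : par r b = 1)
    (f : Cochain m) : Qop r a b (Sop a b f) = - Sop a b (Qop r a b f) := by
  have : Qop r a b ∘ₗ Sop a b = - (Sop a b ∘ₗ Qop r a b) := by
    apply coch_ext
    · intro x
      simp only [LinearMap.comp_apply, LinearMap.neg_apply, Sop_single, Qop_nil]
      split_ifs <;> simp [Qop_nil]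
    · intro i I x h
      simp only [LinearMap.comp_apply, LinearMap.neg_apply] at h ⊢
      rw [Sop_lam, Qop_lam r a b ha hb, Qop_lam r a b ha hb, map_add, Sop_lam, h]
      split_ifs with hi
      · simp only [Sop_lam, twist_Sop r a b ha hb, map_neg]
        abel
      · simp
  exact LinearMap.congr_fun this f

lemma Qop_Rop (r : ℕ) {m : ℕ} (a b : Fin m) (hab : a ≠ b) (ha : par r a = 0) (hb : par r b = 1)
    (f : Cochain m) : Qop r a b (Rop a f) = Rop a (Qop r a b f) := by
  have : Qop r a b ∘ₗ Rop a = Rop a ∘ₗ Qop r a b := by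
    apply coch_ext
    · intro x
      simp only [LinearMap.comp_apply, Rop_single, Qop_nil, List.nil_append, single_cons]
      rw [Qop_lam r a b ha hb]
      simp [hab, Qop_nil]
    · intro i I x h
      simp only [LinearMap.comp_apply] at h ⊢
      rw [Rop_lam, Qop_lam r a b ha hb, Qop_lam r a b ha hb, map_add, Rop_lam, h]
      split_ifs with hi
      · simp only [Rop_lam, twist_Rop r a ha]
      · simp
  exact LinearMap.congr_fun this f

lemma Aop_eq (r : ℕ) {m : ℕ} (a b : Fin m) (ha : par r a = 0) (f : Cochain m) :
    Aop r a b f = lam [a] (Sop a b f) + Rop a (Sop a b f) := by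
  have : Aop r a b = lam [a] ∘ₗ Sop a b + Rop a ∘ₗ Sop a b := by
    apply coch_ext'
    intro I x
    simp only [Aop, dd, comp_single, LinearMap.add_apply, LinearMap.comp_apply, Sop_single]
    simp only [basisComp, List.length_cons, List.length_nil]
    rw [Fin.sum_univ_two]
    by_cases h : x = a
    · subst h
      simp [lam_single, Rop_single, insertAt, lpar, ha, add_comm]
    · simp [h, Ne.symm h]
  rw [this]; rfl

lemma Dop_Dop (r : ℕ) {m : ℕ} (a b : Fin m) (hab : a ≠ b) (ha : par r a = 0) (hb : par r b = 1)
    (f : Cochain m) : Dop r a b (Dop r a b f) = 0 := by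
  simp only [Dop_eq, LinearMap.sub_apply, map_sub, Aop_eq r a b ha, map_add, Sop_lam, Sop_Rop,
    Sop_Sop a b hab, Qop_Qop r a b hab ha hb, Qop_lam r a b ha hb, Qop_Rop r a b hab ha hb,
    Qop_Sop r a b ha hb, if_neg hab]
  simp

/-! ### Dimension count for the internal complex -/

lemma Cnx_le {m n : ℕ} {x : Fin m} {P : Submodule ℂ (Cochain m)}
    (h : ∀ I : List (Fin m), I.length = n → (single (I, x) 1 : Cochain m) ∈ P) :
    Cnx m n x ≤ P := by
  rw [Cnx, Submodule.span_le]
  rintro f ⟨I, hI, rfl⟩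
  exact h I hI

lemma single_mem_Cnx {m n : ℕ} {x : Fin m} {I : List (Fin m)} (h : I.length = n) :
    (single (I, x) 1 : Cochain m) ∈ Cnx m n x :=
  Submodule.subset_span ⟨I, h, rfl⟩

lemma finrank_Cnx (m n : ℕ) (x : Fin m) : Module.finrank ℂ (Cnx m n x) = m ^ n := by
  have h1 : LinearIndependent ℂ
      (fun v : List.Vector (Fin m) n => (single (v.1, x) 1 : Cochain m)) := by
    have := (Finsupp.basisSingleOne (R := ℂ) (ι := List (Fin m) × Fin m)).linearIndependent
    have h2 := this.comp (fun v : List.Vector (Fin m) n => (v.1, x)) (by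
      intro v w h
      simp only [Prod.mk.injEq, and_true] at h
      exact Subtype.ext h)
    simpa [Function.comp_def] using h2
  have h2 := finrank_span_eq_card h1
  rw [card_vector, Fintype.card_fin] at h2
  rw [← h2, Cnx]
  suffices h : {f : Cochain m | ∃ I : List (Fin m), I.length = n ∧ f = single (I, x) 1} =
      Set.range (fun v : List.Vector (Fin m) n => (single (v.1, x) 1 : Cochain m)) by
    rw [h]
  ext f
  constructor
  · rintro ⟨I, hI, rfl⟩
    exact ⟨⟨I, hI⟩, rfl⟩
  · rintro ⟨⟨I, hI⟩, rfl⟩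
    exact ⟨I, hI, rfl⟩

instance finite_Cnx (m n : ℕ) (x : Fin m) : FiniteDimensional ℂ (Cnx m n x) := by
  apply FiniteDimensional.span_of_finite
  refine ((List.finite_length_eq (Fin m) n).image
    (fun I => (single (I, x) 1 : Cochain m))).subset ?_
  rintro f ⟨I, hI, rfl⟩
  exact ⟨I, hI, rfl⟩

lemma lam_mem {m n : ℕ} {x : Fin m} (i : Fin m) {f : Cochain m} (h : f ∈ Cnx m n x) :
    lam [i] f ∈ Cnx m (n + 1) x := by
  have : Cnx m n x ≤ (Cnx m (n + 1) x).comap (lam [i]) := Cnx_le fun I hI => by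
    rw [Submodule.mem_comap, ← single_cons]
    exact single_mem_Cnx (by simp [hI])
  exact this h

lemma twist_mem (r : ℕ) {m n : ℕ} {x : Fin m} {f : Cochain m} (h : f ∈ Cnx m n x) :
    twist r f ∈ Cnx m n x := by
  have : Cnx m n x ≤ (Cnx m n x).comap (twist r) := Cnx_le fun I hI => by
    rw [Submodule.mem_comap, twist_single]
    exact Submodule.smul_mem _ _ (single_mem_Cnx hI)
  exact this h

lemma Rop_mem {m n : ℕ} {x : Fin m} (i : Fin m) {f : Cochain m} (h : f ∈ Cnx m n x) :
    Rop i f ∈ Cnx m (n + 1) x := by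
  have : Cnx m n x ≤ (Cnx m (n + 1) x).comap (Rop i) := Cnx_le fun I hI => by
    rw [Submodule.mem_comap, Rop_single]
    exact single_mem_Cnx (by simp [hI])
  exact this h

lemma Qop_mem (r : ℕ) {m n : ℕ} (a b : Fin m) (ha : par r a = 0) (hb : par r b = 1)
    {x : Fin m} {f : Cochain m} (h : f ∈ Cnx m n x) :
    Qop r a b f ∈ Cnx m (n + 1) x := by
  have : ∀ (I : List (Fin m)), Qop r a b (single (I, x) 1) ∈ Cnx m (I.length + 1) x := by
    intro I
    induction I with
    | nil => rw [Qop_nil]; exact Submodule.zero_mem _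
    | cons i I ih =>
      rw [single_cons, Qop_lam r a b ha hb]
      refine Submodule.add_mem _ (lam_mem _ ih) ?_
      split_ifs
      · exact lam_mem _ (lam_mem _ (twist_mem _ (single_mem_Cnx rfl)))
      · exact Submodule.zero_mem _
  have h2 : Cnx m n x ≤ (Cnx m (n + 1) x).comap (Qop r a b) := Cnx_le fun I hI => by
    subst hI
    exact this I
  exact h2 h

/-- Remove the first letter `j`. -/
noncomputable def Cut {m : ℕ} (j : Fin m) : Cochain m →ₗ[ℂ] Cochain m :=
  Finsupp.lsum ℂ fun p => LinearMap.toSpanSingleton ℂ (Cochain m)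
    (if p.1.head? = some j then single (p.1.tail, p.2) 1 else 0)

lemma Cut_nil {m : ℕ} (j x : Fin m) : Cut j (single ([], x) 1 : Cochain m) = 0 := by
  simp [Cut]

lemma Cut_lam {m : ℕ} (j i : Fin m) (f : Cochain m) :
    Cut j (lam [i] f) = if i = j then f else 0 := by
  have : Cut j ∘ₗ lam [i] = if i = j then LinearMap.id else 0 := by
    apply coch_ext'
    intro I x
    simp only [LinearMap.comp_apply, lam_single]
    split_ifs with h <;> simp [Cut, h]
  have := LinearMap.congr_fun this f
  split_ifs at this ⊢ <;> simpa using this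

lemma lam_inj {m : ℕ} (i : Fin m) : Function.Injective (lam [i] : Cochain m →ₗ[ℂ] Cochain m) := by
  intro f g h
  have := congrArg (Cut i) h
  simpa [Cut_lam] using this

lemma Cut_mem {m n : ℕ} {x : Fin m} (j : Fin m) {f : Cochain m} (h : f ∈ Cnx m (n + 1) x) :
    Cut j f ∈ Cnx m n x := by
  have : Cnx m (n + 1) x ≤ (Cnx m n x).comap (Cut j) := Cnx_le fun I hI => by
    rw [Submodule.mem_comap]
    cases I with
    | nil => simp at hI
    | cons i I =>
      rw [single_cons, Cut_lam]
      split_ifs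
      · exact single_mem_Cnx (by simpa using hI)
      · exact Submodule.zero_mem _
  exact this h

lemma Cut_zero {m : ℕ} {x : Fin m} (j : Fin m) {f : Cochain m} (h : f ∈ Cnx m 0 x) :
    Cut j f = 0 := by
  have : Cnx m 0 x ≤ LinearMap.ker (Cut j) := Cnx_le fun I hI => by
    rw [List.length_eq_zero_iff] at hI
    subst hI
    exact Cut_nil j x
  exact this h

lemma Qop_zero (r : ℕ) {m : ℕ} {a b x : Fin m} {f : Cochain m} (h : f ∈ Cnx m 0 x) :
    Qop r a b f = 0 := by
  have : Cnx m 0 x ≤ LinearMap.ker (Qop r a b) := Cnx_le fun I hI => by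
    rw [List.length_eq_zero_iff] at hI
    subst hI
    exact Qop_nil r a b x
  exact this h

lemma sum_lam_Cut {m n : ℕ} {x : Fin m} {f : Cochain m} (h : f ∈ Cnx m (n + 1) x) :
    ∑ i, lam [i] (Cut i f) = f := by
  have : Cnx m (n + 1) x ≤ LinearMap.ker ((∑ i, lam [i] ∘ₗ Cut i) - LinearMap.id) :=
    Cnx_le fun I hI => by
      cases I with
      | nil => simp at hI
      | cons i I =>
        refine LinearMap.mem_ker.mpr ?_
        rw [single_cons]
        simp only [LinearMap.sub_apply, LinearMap.sum_apply, LinearMap.comp_apply, Cut_lam,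
          LinearMap.id_apply]
        rw [Finset.sum_eq_single i]
        · simp
        · intro j _ hj
          simp [Ne.symm hj]
        · simp
  have := this h
  simpa [sub_eq_zero] using this

lemma eq_of_Cut {m n : ℕ} {x : Fin m} {f g : Cochain m} (hf : f ∈ Cnx m (n + 1) x)
    (hg : g ∈ Cnx m (n + 1) x) (h : ∀ j, Cut j f = Cut j g) : f = g := by
  rw [← sum_lam_Cut hf, ← sum_lam_Cut hg]
  simp [h]

lemma Cut_Qop (r : ℕ) {m : ℕ} (a b : Fin m) (ha : par r a = 0) (hb : par r b = 1)
    (j : Fin m) (f : Cochain m) :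
    Cut j (Qop r a b f) = Qop r a b (Cut j f) +
      if j = a then lam [a] (twist r (Cut b f)) else 0 := by
  have : Cut j ∘ₗ Qop r a b = Qop r a b ∘ₗ Cut j +
      if j = a then lam [a] ∘ₗ twist r ∘ₗ Cut b else 0 := by
    apply coch_ext
    · intro x
      split_ifs <;> simp [Qop_nil, Cut_nil]
    · intro i I x _
      simp only [LinearMap.comp_apply, LinearMap.add_apply]
      rw [Qop_lam r a b ha hb, map_add, Cut_lam, Cut_lam]
      congr 1
      · split_ifs <;> simp
      · by_cases h1 : i = b <;> by_cases h2 : j = a <;>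
          simp [h1, h2, Cut_lam, @eq_comm _ a j]
  have := LinearMap.congr_fun this f
  split_ifs at this ⊢ <;> simpa using this

lemma finrank_map_add {V W : Type*} [AddCommGroup V] [Module ℂ V] [AddCommGroup W] [Module ℂ W]
    (P : Submodule ℂ V) [FiniteDimensional ℂ P] (f : V →ₗ[ℂ] W) :
    Module.finrank ℂ (P.map f) + Module.finrank ℂ (P ⊓ LinearMap.ker f : Submodule ℂ V) =
      Module.finrank ℂ P := by
  have h := LinearMap.finrank_range_add_finrank_ker (f.domRestrict P)
  rw [LinearMap.range_domRestrict, LinearMap.ker_domRestrict] at h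
  rw [← h]
  congr 1
  rw [← Submodule.finrank_map_subtype_eq, Submodule.map_comap_subtype]

lemma finrank_map_inj {V W : Type*} [AddCommGroup V] [Module ℂ V] [AddCommGroup W] [Module ℂ W]
    (P : Submodule ℂ V) (f : V →ₗ[ℂ] W) (hf : Function.Injective f) :
    Module.finrank ℂ (P.map f) = Module.finrank ℂ P :=
  (LinearEquiv.finrank_eq (Submodule.equivMapOfInjective f hf P)).symm

lemma finrank_pi_sub {V ι : Type*} [Fintype ι] [AddCommGroup V] [Module ℂ V]
    (M : ι → Submodule ℂ V) [∀ i, FiniteDimensional ℂ (M i)] :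
    Module.finrank ℂ (Submodule.pi Set.univ M) = ∑ i, Module.finrank ℂ (M i) := by
  rw [← Module.finrank_pi_fintype ℂ]
  apply LinearEquiv.finrank_eq
  exact
    { toFun := fun f i => ⟨f.1 i, f.2 i (Set.mem_univ i)⟩
      invFun := fun g => ⟨fun i => (g i).1, fun i _ => (g i).2⟩
      map_add' := fun _ _ => rfl
      map_smul' := fun _ _ => rfl
      left_inv := fun _ => rfl
      right_inv := fun _ => rfl }

/-- Internal cocycles. -/
noncomputable def KK (r : ℕ) {m : ℕ} (a b x : Fin m) (n : ℕ) : Submodule ℂ (Cochain m) :=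
  Cnx m n x ⊓ LinearMap.ker (Qop r a b)

/-- Internal coboundaries (image of degree `n`). -/
noncomputable def BB (r : ℕ) {m : ℕ} (a b x : Fin m) (n : ℕ) : Submodule ℂ (Cochain m) :=
  (Cnx m n x).map (Qop r a b)

/-- Cochains whose left multiple by `a` is a coboundary. -/
noncomputable def YY (r : ℕ) {m : ℕ} (a b x : Fin m) (n : ℕ) : Submodule ℂ (Cochain m) :=
  Cnx m n x ⊓ (BB r a b x n).comap (lam [a])

instance finite_KK (r : ℕ) {m : ℕ} (a b x : Fin m) (n : ℕ) :
    FiniteDimensional ℂ (KK r a b x n) :=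
  Submodule.finiteDimensional_of_le (inf_le_left : KK r a b x n ≤ Cnx m n x)

instance finite_YY (r : ℕ) {m : ℕ} (a b x : Fin m) (n : ℕ) :
    FiniteDimensional ℂ (YY r a b x n) :=
  Submodule.finiteDimensional_of_le (inf_le_left : YY r a b x n ≤ Cnx m n x)

instance finite_BB (r : ℕ) {m : ℕ} (a b x : Fin m) (n : ℕ) :
    FiniteDimensional ℂ (BB r a b x n) := by
  unfold BB; infer_instance

lemma BB_add_KK (r : ℕ) {m : ℕ} (a b x : Fin m) (n : ℕ) :
    Module.finrank ℂ (BB r a b x n) + Module.finrank ℂ (KK r a b x n) = m ^ n := by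
  rw [← finrank_Cnx m n x]
  exact finrank_map_add _ _

section
variable (r : ℕ) {m : ℕ} (a b x : Fin m) (hab : a ≠ b) (ha : par r a = 0) (hb : par r b = 1)

lemma Qop_lam_a (hab : a ≠ b) (ha : par r a = 0) (hb : par r b = 1) (f : Cochain m) :
    Qop r a b (lam [a] f) = lam [a] (Qop r a b f) := by
  rw [Qop_lam r a b ha hb]; simp [hab]

lemma YY_le_KK (hab : a ≠ b) (ha : par r a = 0) (hb : par r b = 1) (n : ℕ) :
    YY r a b x n ≤ KK r a b x n := by
  rintro f ⟨h1, u, hu, h2⟩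
  refine ⟨h1, ?_⟩
  refine LinearMap.mem_ker.mpr ?_
  apply lam_inj a
  rw [← Qop_lam_a r a b hab ha hb, ← h2, Qop_Qop r a b hab ha hb, map_zero]

lemma twist_mem_YY (ha : par r a = 0) (hb : par r b = 1) (n : ℕ)
    {f : Cochain m} (hf : f ∈ YY r a b x n) : twist r f ∈ YY r a b x n := by
  obtain ⟨h1, u, hu, h2⟩ := hf
  refine ⟨twist_mem r h1, - twist r u, Submodule.neg_mem _ (twist_mem r hu), ?_⟩
  rw [map_neg, ← twist_Qop r a b ha hb, h2, twist_lam, ha]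
  simp

lemma YY_zero : YY r a b x 0 = ⊥ := by
  rw [eq_bot_iff]
  rintro f ⟨h1, u, hu, h2⟩
  rw [Qop_zero r hu] at h2
  exact (lam_inj a (by rw [← h2, map_zero]))

lemma YY_succ (hab : a ≠ b) (ha : par r a = 0) (hb : par r b = 1) (n : ℕ) :
    YY r a b x (n + 1) = BB r a b x n ⊔ (KK r a b x n).map (lam [a]) := by
  apply le_antisymm
  · rintro f ⟨h1, u, hu, h2⟩
    have ea := congrArg (Cut a) h2
    have eb := congrArg (Cut b) h2
    rw [Cut_Qop r a b ha hb, Cut_lam] at ea eb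
    simp only [if_true, hab, hab.symm, if_false, add_zero] at ea eb
    rw [← ea]
    apply Submodule.add_mem_sup
    · exact ⟨_, Cut_mem a hu, rfl⟩
    · refine ⟨_, ⟨twist_mem r (Cut_mem b hu), ?_⟩, rfl⟩
      refine LinearMap.mem_ker.mpr ?_
      have := twist_Qop r a b ha hb (Cut b u)
      rw [eb, map_zero] at this
      exact neg_eq_zero.mp this.symm
  · apply sup_le
    · rintro _ ⟨u, hu, rfl⟩
      refine ⟨Qop_mem r a b ha hb hu, lam [a] u, lam_mem a hu, ?_⟩
      exact Qop_lam_a r a b hab ha hb u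
    · rintro _ ⟨v, ⟨hv, hv'⟩, rfl⟩
      replace hv' := LinearMap.mem_ker.mp hv'
      refine ⟨lam_mem a hv, lam [b] (twist r v), lam_mem b (twist_mem r hv), ?_⟩
      have := twist_Qop r a b ha hb v
      rw [hv', map_zero] at this
      rw [Qop_lam r a b ha hb, neg_eq_zero.mp this.symm, twist_twist]
      simp

lemma BB_inf (hab : a ≠ b) (ha : par r a = 0) (hb : par r b = 1) (n : ℕ) :
    BB r a b x n ⊓ (KK r a b x n).map (lam [a]) = (YY r a b x n).map (lam [a]) := by
  apply le_antisymm
  · rintro _ ⟨h1, v, hv, rfl⟩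
    exact ⟨v, ⟨hv.1, h1⟩, rfl⟩
  · rintro _ ⟨v, hv, rfl⟩
    exact ⟨hv.2, v, YY_le_KK r a b x hab ha hb n hv, rfl⟩

lemma y_rec (hab : a ≠ b) (ha : par r a = 0) (hb : par r b = 1) (n : ℕ) :
    Module.finrank ℂ (YY r a b x (n + 1)) + Module.finrank ℂ (YY r a b x n) = m ^ n := by
  have h := Submodule.finrank_sup_add_finrank_inf_eq (BB r a b x n) ((KK r a b x n).map (lam [a]))
  rw [← YY_succ r a b x hab ha hb, BB_inf r a b x hab ha hb, finrank_map_inj _ _ (lam_inj a),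
    finrank_map_inj _ _ (lam_inj a), BB_add_KK] at h
  exact h

lemma k_rec (hab : a ≠ b) (ha : par r a = 0) (hb : par r b = 1) (n : ℕ) :
    Module.finrank ℂ (KK r a b x (n + 1)) =
      (m - 1) * Module.finrank ℂ (KK r a b x n) + Module.finrank ℂ (YY r a b x n) := by
  classical
  let Ψ : Cochain m →ₗ[ℂ] (Fin m → Cochain m) :=
    LinearMap.pi fun j => if j = a then 0 else Cut j
  have hΨ : ∀ f j, Ψ f j = if j = a then 0 else Cut j f := by
    intro f j
    simp only [Ψ, LinearMap.pi_apply]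
    split_ifs <;> rfl
  let M : Fin m → Submodule ℂ (Cochain m) := fun j =>
    if j = a then ⊥ else if j = b then YY r a b x n else KK r a b x n
  have hMa : M a = ⊥ := by simp [M]
  have hMb : M b = YY r a b x n := by simp [M, hab.symm]
  have hMc : ∀ j, j ≠ a → j ≠ b → M j = KK r a b x n := by
    intro j h1 h2; simp [M, h1, h2]
  have hMK : ∀ j, M j ≤ KK r a b x n := by
    intro j
    simp only [M]
    split_ifs
    · exact bot_le
    · exact YY_le_KK r a b x hab ha hb n
    · exact le_rfl
  have hfin : ∀ j, FiniteDimensional ℂ (M j) := fun j =>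
    Submodule.finiteDimensional_of_le (hMK j)
  have hmap : (KK r a b x (n + 1)).map Ψ = Submodule.pi Set.univ M := by
    apply le_antisymm
    · rintro _ ⟨f, ⟨hf, hf'⟩, rfl⟩ j _
      replace hf' := LinearMap.mem_ker.mp hf'
      change Ψ f j ∈ M j
      rw [hΨ]
      have ej := congrArg (Cut j) hf'
      rw [Cut_Qop r a b ha hb, map_zero] at ej
      by_cases h1 : j = a
      · simp [h1]
      · simp only [h1, if_false, add_zero] at ej ⊢
        by_cases h2 : j = b
        · subst h2
          rw [hMb]
          have ea := congrArg (Cut a) hf'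
          rw [Cut_Qop r a j ha hb, map_zero] at ea
          rw [if_pos rfl] at ea
          rw [← twist_twist r (Cut j f)]
          apply twist_mem_YY r a j x ha hb
          refine ⟨twist_mem r (Cut_mem j hf), - Cut a f, Submodule.neg_mem _ (Cut_mem a hf), ?_⟩
          rw [map_neg]
          exact neg_eq_of_add_eq_zero_right ea
        · rw [hMc j h1 h2]
          exact ⟨Cut_mem j hf, ej⟩
    · intro g hg
      have hgK : ∀ j, g j ∈ KK r a b x n := fun j => hMK j (hg j (Set.mem_univ j))
      have hga : g a = 0 := by simpa [hMa] using hg a (Set.mem_univ a)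
      have hgb : g b ∈ YY r a b x n := by
        have : g b ∈ M b := hg b (Set.mem_univ b)
        rwa [hMb] at this
      obtain ⟨_, u, hu, h2⟩ := twist_mem_YY r a b x ha hb n hgb
      have hmem : (∑ j, lam [j] (g j)) - lam [a] u ∈ Cnx m (n + 1) x :=
        Submodule.sub_mem _ (Submodule.sum_mem _ fun j _ => lam_mem j (hgK j).1) (lam_mem a hu)
      have hcut : ∀ j, Cut j ((∑ j, lam [j] (g j)) - lam [a] u) =
          g j - if j = a then u else 0 := by
        intro j
        rw [map_sub, map_sum, Cut_lam]
        simp only [Cut_lam]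
        simp [eq_comm]
      refine ⟨(∑ j, lam [j] (g j)) - lam [a] u, ⟨hmem, ?_⟩, ?_⟩
      · refine LinearMap.mem_ker.mpr ?_
        apply eq_of_Cut (Qop_mem r a b ha hb hmem) (Submodule.zero_mem _)
        intro j
        rw [Cut_Qop r a b ha hb, hcut, hcut, map_sub, LinearMap.mem_ker.mp (hgK j).2, map_zero]
        split_ifs with h3 h4
        · exact absurd h4.symm hab
        · rw [h2, sub_zero]; simp
        · simp
      · funext j
        rw [hΨ, hcut]
        split_ifs with h
        · rw [h, hga]
        · simp
  have hker : KK r a b x (n + 1) ⊓ LinearMap.ker Ψ = (KK r a b x n).map (lam [a]) := by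
    apply le_antisymm
    · rintro f ⟨⟨hf, hf'⟩, h⟩
      replace hf' := LinearMap.mem_ker.mp hf'
      replace h := LinearMap.mem_ker.mp h
      have h0 : ∀ j, j ≠ a → Cut j f = 0 := by
        intro j hj
        have := congrFun h j
        rw [hΨ, if_neg hj] at this
        exact this
      have ea := congrArg (Cut a) hf'
      rw [Cut_Qop r a b ha hb, map_zero, h0 b hab.symm] at ea
      refine ⟨Cut a f, ⟨Cut_mem a hf, ?_⟩, ?_⟩
      · simpa using ea
      · apply eq_of_Cut (lam_mem a (Cut_mem a hf)) hf
        intro j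
        rw [Cut_lam]
        split_ifs with h
        · rw [h]
        · rw [h0 j (Ne.symm h)]
    · rintro _ ⟨v, ⟨hv, hv'⟩, rfl⟩
      replace hv' := LinearMap.mem_ker.mp hv'
      refine ⟨⟨lam_mem a hv, ?_⟩, ?_⟩
      · refine LinearMap.mem_ker.mpr ?_
        rw [Qop_lam_a r a b hab ha hb, hv', map_zero]
      · refine LinearMap.mem_ker.mpr ?_
        funext j
        rw [hΨ, Cut_lam]
        split_ifs with h1 h2
        · rfl
        · exact absurd h2.symm h1
        · rfl
  have h := finrank_map_add (KK r a b x (n + 1)) Ψ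
  rw [hmap, hker, finrank_pi_sub, finrank_map_inj _ _ (lam_inj a)] at h
  rw [← h, ← Finset.add_sum_erase _ _ (Finset.mem_univ a),
    ← Finset.add_sum_erase _ _ (Finset.mem_erase.mpr ⟨hab.symm, Finset.mem_univ b⟩),
    Finset.sum_congr rfl (g := fun _ => Module.finrank ℂ (KK r a b x n)), hMa, hMb,
    Finset.sum_const, Finset.card_erase_of_mem (Finset.mem_erase.mpr ⟨hab.symm, Finset.mem_univ b⟩),
    Finset.card_erase_of_mem (Finset.mem_univ a), Finset.card_univ, Fintype.card_fin,
    finrank_bot, smul_eq_mul]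
  · have hm : 2 ≤ m := by
      have := a.2; have := b.2
      have : (a : ℕ) ≠ b := fun h => hab (Fin.ext h)
      omega
    obtain ⟨k, rfl⟩ := Nat.exists_eq_add_of_le hm
    rw [show 2 + k - 1 - 1 = k by omega, show 2 + k - 1 = k + 1 by omega]
    ring
  · intro j hj
    simp only [Finset.mem_erase, Finset.mem_univ, and_true] at hj
    rw [hMc j hj.2 hj.1]

lemma k_zero : Module.finrank ℂ (KK r a b x 0) = 1 := by
  have : KK r a b x 0 = Cnx m 0 x := inf_eq_left.mpr fun f hf => Qop_zero r hf
  rw [this, finrank_Cnx, pow_zero]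

lemma k_sum (hab : a ≠ b) (ha : par r a = 0) (hb : par r b = 1) (n : ℕ) :
    Module.finrank ℂ (KK r a b x n) + Module.finrank ℂ (KK r a b x (n + 1)) =
      m ^ n + (m - 1) ^ (n + 1) := by
  have hm : 1 ≤ m := by have := a.2; omega
  induction n with
  | zero =>
    rw [k_rec r a b x hab ha hb, YY_zero, k_zero, finrank_bot]
    simp
  | succ n ih =>
    rw [k_rec r a b x hab ha hb (n + 1)]
    have h1 := k_rec r a b x hab ha hb n
    have h2 := y_rec r a b x hab ha hb n
    obtain ⟨k, rfl⟩ := Nat.exists_eq_add_of_le hm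
    rw [show 1 + k - 1 = k by omega] at *
    rw [pow_succ (1 + k) n, pow_succ k (n + 1)]
    zify at *
    linear_combination h1 + h2 + k * ih

end

/-! ### The pair complex -/

section
variable (r : ℕ) {m : ℕ} (a b : Fin m)

lemma Sop_a {n : ℕ} {f : Cochain m} (h : f ∈ Cnx m n a) : Sop a b f ∈ Cnx m n b := by
  have : Cnx m n a ≤ (Cnx m n b).comap (Sop a b) := Cnx_le fun I hI => by
    rw [Submodule.mem_comap, Sop_single, if_pos rfl]
    exact single_mem_Cnx hI
  exact this h

lemma Sop_b (hab : a ≠ b) {n : ℕ} {f : Cochain m} (h : f ∈ Cnx m n b) : Sop a b f = 0 := by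
  have : Cnx m n b ≤ LinearMap.ker (Sop a b) := Cnx_le fun I hI => by
    rw [LinearMap.mem_ker, Sop_single, if_neg hab.symm]
  exact this h

lemma Aop_a (ha : par r a = 0) {n : ℕ} {f : Cochain m} (h : f ∈ Cnx m n a) :
    Aop r a b f ∈ Cnx m (n + 1) b := by
  rw [Aop_eq r a b ha]
  exact Submodule.add_mem _ (lam_mem a (Sop_a a b h)) (Rop_mem a (Sop_a a b h))

lemma Dop_b (hab : a ≠ b) (ha : par r a = 0) {n : ℕ} {f : Cochain m} (h : f ∈ Cnx m n b) :
    Dop r a b f = - Qop r a b f := by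
  rw [Dop_eq, LinearMap.sub_apply, Aop_eq r a b ha, Sop_b a b hab h]
  simp

lemma projOut_a {n : ℕ} {f : Cochain m} (h : f ∈ Cnx m n a) : projOut a f = f := by
  have : Cnx m n a ≤ LinearMap.ker (projOut a - LinearMap.id) := Cnx_le fun I hI => by
    rw [LinearMap.mem_ker]
    simp [projOut]
  have := LinearMap.mem_ker.mp (this h)
  simpa [sub_eq_zero] using this

lemma projOut_b (hab : a ≠ b) {n : ℕ} {f : Cochain m} (h : f ∈ Cnx m n b) : projOut a f = 0 := by
  have : Cnx m n b ≤ LinearMap.ker (projOut a) := Cnx_le fun I hI => by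
    rw [LinearMap.mem_ker]
    simp [projOut, hab.symm]
  exact LinearMap.mem_ker.mp (this h)

lemma Zm_eq (hab : a ≠ b) (ha : par r a = 0) (n : ℕ) : Zm r a b n = KK r a b b n := by
  ext f
  simp only [Zm, KK, Submodule.mem_inf, LinearMap.mem_ker]
  refine and_congr_right fun h => ?_
  rw [Dop_b r a b hab ha h, neg_eq_zero]

instance finite_Cpair (n : ℕ) : FiniteDimensional ℂ (Cpair m a b n) := by
  unfold Cpair; infer_instance

instance finite_Zpair (n : ℕ) : FiniteDimensional ℂ (Zpair r a b n) :=
  Submodule.finiteDimensional_of_le (inf_le_left : Zpair r a b n ≤ Cpair m a b n)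

instance finite_Zm (n : ℕ) : FiniteDimensional ℂ (Zm r a b n) :=
  Submodule.finiteDimensional_of_le (inf_le_left : Zm r a b n ≤ Cnx m n b)

instance finite_Bpair (n : ℕ) : FiniteDimensional ℂ (Bpair r a b n) := by
  cases n <;> · unfold Bpair; infer_instance

lemma Cpair_ker (hab : a ≠ b) (n : ℕ) :
    Cpair m a b n ⊓ LinearMap.ker (projOut a) = Cnx m n b := by
  apply le_antisymm
  · rintro f ⟨h, h'⟩
    obtain ⟨u, hu, v, hv, rfl⟩ := Submodule.mem_sup.mp h
    have h2 := LinearMap.mem_ker.mp h'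
    rw [map_add, projOut_a a hu, projOut_b a b hab hv, add_zero] at h2
    rw [h2, zero_add]
    exact hv
  · intro f hf
    exact ⟨Submodule.mem_sup_right hf, LinearMap.mem_ker.mpr (projOut_b a b hab hf)⟩

lemma finrank_Cpair (hab : a ≠ b) (n : ℕ) :
    Module.finrank ℂ (Cpair m a b n) = 2 * m ^ n := by
  rw [← finrank_map_add (Cpair m a b n) (projOut a), Cpair_ker a b hab, finrank_Cnx]
  have : (Cpair m a b n).map (projOut a) = Cnx m n a := by
    apply le_antisymm
    · rintro _ ⟨f, hf, rfl⟩
      obtain ⟨u, hu, v, hv, rfl⟩ := Submodule.mem_sup.mp hf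
      rw [map_add, projOut_a a hu, projOut_b a b hab hv, add_zero]
      exact hu
    · intro f hf
      exact ⟨f, Submodule.mem_sup_left hf, projOut_a a hf⟩
  rw [this, finrank_Cnx]
  ring

lemma Dop_Cpair (hab : a ≠ b) (ha : par r a = 0) (hb : par r b = 1) {n : ℕ} {f : Cochain m}
    (hf : f ∈ Cpair m a b n) : Dop r a b f ∈ Cpair m a b (n + 1) := by
  obtain ⟨u, hu, v, hv, rfl⟩ := Submodule.mem_sup.mp hf
  rw [map_add, Dop_b r a b hab ha hv, Dop_eq, LinearMap.sub_apply]
  refine Submodule.add_mem _ (Submodule.sub_mem _ ?_ ?_) (Submodule.neg_mem _ ?_)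
  · exact Submodule.mem_sup_right (Aop_a r a b ha hu)
  · exact Submodule.mem_sup_left (Qop_mem r a b ha hb hu)
  · exact Submodule.mem_sup_right (Qop_mem r a b ha hb hv)

lemma Bpair_le_Zpair (hab : a ≠ b) (ha : par r a = 0) (hb : par r b = 1) (n : ℕ) :
    Bpair r a b n ≤ Zpair r a b n := by
  cases n with
  | zero => exact bot_le
  | succ n =>
    rintro _ ⟨f, hf, rfl⟩
    exact ⟨Dop_Cpair r a b hab ha hb hf, LinearMap.mem_ker.mpr (Dop_Dop r a b hab ha hb f)⟩

lemma z_add_b (n : ℕ) (hab : a ≠ b) :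
    Module.finrank ℂ (Bpair r a b (n + 1)) + Module.finrank ℂ (Zpair r a b n) = 2 * m ^ n := by
  rw [← finrank_Cpair a b hab]
  exact finrank_map_add _ _

lemma projOut_Dop (hab : a ≠ b) (ha : par r a = 0) (hb : par r b = 1) {n : ℕ} {u v : Cochain m}
    (hu : u ∈ Cnx m n a) (hv : v ∈ Cnx m n b) :
    projOut a (Dop r a b (u + v)) = - Qop r a b u := by
  rw [map_add, Dop_b r a b hab ha hv, Dop_eq, LinearMap.sub_apply, map_add, map_sub, map_neg,
    projOut_b a b hab (Aop_a r a b ha hu), projOut_a a (Qop_mem r a b ha hb hu),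
    projOut_b a b hab (Qop_mem r a b ha hb hv)]
  simp

lemma Bpair_map (hab : a ≠ b) (ha : par r a = 0) (hb : par r b = 1) (n : ℕ) :
    (Bpair r a b (n + 1)).map (projOut a) = BB r a b a n := by
  apply le_antisymm
  · rintro _ ⟨_, ⟨f, hf, rfl⟩, rfl⟩
    obtain ⟨u, hu, v, hv, rfl⟩ := Submodule.mem_sup.mp hf
    rw [projOut_Dop r a b hab ha hb hu hv]
    exact Submodule.neg_mem _ ⟨u, hu, rfl⟩
  · rintro _ ⟨u, hu, rfl⟩
    refine ⟨_, ⟨-u + 0, Submodule.mem_sup.mpr ⟨-u, Submodule.neg_mem _ hu, 0,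
      Submodule.zero_mem _, rfl⟩, rfl⟩, ?_⟩
    rw [projOut_Dop r a b hab ha hb (Submodule.neg_mem _ hu) (Submodule.zero_mem (Cnx m n b))]
    simp

lemma Bpair_ker (hab : a ≠ b) (ha : par r a = 0) (hb : par r b = 1) (n : ℕ) :
    Bpair r a b n ⊓ LinearMap.ker (projOut a) = Zm r a b n ⊓ Bpair r a b n := by
  apply le_antisymm
  · rintro f ⟨h1, h2⟩
    have h3 := Bpair_le_Zpair r a b hab ha hb n h1
    refine ⟨⟨?_, h3.2⟩, h1⟩
    have : f ∈ Cpair m a b n ⊓ LinearMap.ker (projOut a) := ⟨h3.1, h2⟩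
    rwa [Cpair_ker a b hab] at this
  · rintro f ⟨h1, h2⟩
    exact ⟨h2, LinearMap.mem_ker.mpr (projOut_b a b hab h1.1)⟩

lemma b_eq (hab : a ≠ b) (ha : par r a = 0) (hb : par r b = 1) (n : ℕ) :
    Module.finrank ℂ (BB r a b a n) +
      Module.finrank ℂ (Zm r a b (n + 1) ⊓ Bpair r a b (n + 1) : Submodule ℂ (Cochain m)) =
    Module.finrank ℂ (Bpair r a b (n + 1)) := by
  rw [← Bpair_ker r a b hab ha hb, ← Bpair_map r a b hab ha hb]
  exact finrank_map_add _ _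

lemma Hfhat_add (n : ℕ) :
    Module.finrank ℂ (Hfhat r a b n) +
      Module.finrank ℂ (Zm r a b n ⊓ Bpair r a b n : Submodule ℂ (Cochain m)) =
    Module.finrank ℂ (Zm r a b n) := by
  let g : Zm r a b n →ₗ[ℂ] Hpair r a b n :=
    (Submodule.mkQ _) ∘ₗ Submodule.inclusion (Zm_le_Zpair r a b n)
  have h1 : LinearMap.range g = Hfhat r a b n := by
    have : g = iotaHm r a b n ∘ₗ Submodule.mkQ _ := rfl
    rw [this, LinearMap.range_comp, Submodule.range_mkQ, Submodule.map_top, Hfhat]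
  have h2 : LinearMap.ker g = (Bpair r a b n).comap (Zm r a b n).subtype := by
    ext z
    rw [LinearMap.mem_ker]
    simp only [g, LinearMap.comp_apply, Submodule.mkQ_apply, Submodule.Quotient.mk_eq_zero]
    rfl
  have h := LinearMap.finrank_range_add_finrank_ker g
  rw [h1, h2] at h
  rw [← h]
  congr 1
  rw [← Submodule.finrank_map_subtype_eq (Zm r a b n), Submodule.map_comap_subtype]

lemma Hehat_add (hab : a ≠ b) (ha : par r a = 0) (hb : par r b = 1) (n : ℕ) :
    Module.finrank ℂ (Hehat r a b n) + Module.finrank ℂ (Hfhat r a b n) +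
      Module.finrank ℂ (Bpair r a b n) = Module.finrank ℂ (Zpair r a b n) := by
  rw [Submodule.finrank_quotient_add_finrank]
  rw [← Submodule.finrank_quotient_add_finrank
    ((Bpair r a b n).comap (Zpair r a b n).subtype)]
  congr 1
  rw [← Submodule.finrank_map_subtype_eq (Zpair r a b n), Submodule.map_comap_subtype,
    inf_eq_right.mpr (Bpair_le_Zpair r a b hab ha hb n)]

lemma kk_eq (hab : a ≠ b) (ha : par r a = 0) (hb : par r b = 1) (n : ℕ) :
    Module.finrank ℂ (KK r a b a n) = Module.finrank ℂ (KK r a b b n) := by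
  induction n with
  | zero => rw [k_zero, k_zero]
  | succ n ih =>
    have h1 := k_sum r a b a hab ha hb n
    have h2 := k_sum r a b b hab ha hb n
    omega

lemma main_count (hab : a ≠ b) (ha : par r a = 0) (hb : par r b = 1) (n : ℕ) :
    Module.finrank ℂ (Hfhat r a b (n + 1)) =
      Module.finrank ℂ (Hehat r a b n) + (m - 2) * (m - 1) ^ n := by
  have hm : 2 ≤ m := by
    have := a.2; have := b.2
    have : (a : ℕ) ≠ b := fun h => hab (Fin.ext h)
    omega
  have e1 := Hfhat_add r a b (n + 1)
  have e2 := b_eq r a b hab ha hb n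
  have e3 := z_add_b r a b n hab
  have e4 := BB_add_KK r a b a n
  have e5 := Hehat_add r a b hab ha hb n
  have e6 := Hfhat_add r a b n
  have e7 := k_sum r a b b hab ha hb n
  have e8 := kk_eq r a b hab ha hb n
  rw [Zm_eq r a b hab ha] at e1 e6
  rw [Zm_eq r a b hab ha] at e2
  obtain ⟨k, rfl⟩ := Nat.exists_eq_add_of_le hm
  rw [show 2 + k - 2 = k by omega]
  rw [show 2 + k - 1 = k + 1 by omega] at *
  cases n with
  | zero =>
    have e9 := k_zero r a b b
    have e10 : Module.finrank ℂ (Bpair r a b 0) = 0 := finrank_bot ℂ _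
    have e11 : Module.finrank ℂ (KK r a b b 0 ⊓ Bpair r a b 0 : Submodule ℂ _) = 0 := by
      have : KK r a b b 0 ⊓ Bpair r a b 0 = ⊥ := inf_bot_eq _
      rw [this, finrank_bot]
    simp only [pow_zero, zero_add, pow_one, mul_one] at *
    omega
  | succ n =>
    have f2 := b_eq r a b hab ha hb n
    have f4 := BB_add_KK r a b a n
    have f7 := k_sum r a b b hab ha hb n
    have f8 := kk_eq r a b hab ha hb n
    rw [Zm_eq r a b hab ha] at f2
    rw [show 2 + k - 1 = k + 1 by omega] at f7
    rw [pow_succ (k + 1) (n + 1)] at e7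
    have : (k + 1) ^ (n + 1) * (k + 1) = k * (k + 1) ^ (n + 1) + (k + 1) ^ (n + 1) := by ring
    rw [this] at e7
    omega

end

/-- `dim Ĥ^n_f = dim Ĥ^{n−1}_e + (r+s−2)(r+s−1)^{n−1}` for every `n ≥ 1`. -/
theorem Hfhat_dim_recursion (r s : ℕ) (hr : 1 ≤ r) (hs : 1 ≤ s)
    (e1 fs : Fin (r + s)) (he1 : (e1 : ℕ) = 0) (hfs : (fs : ℕ) = r + s - 1) :
    ∀ n : ℕ,
      Module.finrank ℂ (Hfhat r e1 fs (n + 1)) =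
        Module.finrank ℂ (Hehat r e1 fs n) + (r + s - 2) * (r + s - 1) ^ n := by
  intro n
  refine main_count r e1 fs ?_ ?_ ?_ n
  · intro h
    have := congrArg Fin.val h
    omega
  · simp only [par]
    rw [if_pos (by omega)]
  · simp only [par]
    rw [if_neg (by omega)]


end NilpotentCohomology
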